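/- Let 0<α, 1<p<N/α and q>p−1. Let ω be a nonnegative bounded Radon measure supported in a ball B_R(x0)⊂ℝ^N and let ω_n be the measure with density φ_n*ω, where {φ_n} is a sequence of mollifiers. If there is C2>0 such that ω(K) ≤ C2·Cap_{G_{αp}, q/(q−p+1)}(K) for every compact K⊂ℝ^N, then there is a constant C=C(N,α,p,q)>0 such that ω_n(K) ≤ C·C2·Cap_{G_{αp}, q/(q−p+1)}(K) for every compact K⊂ℝ^N and every n∈ℕ. -/

import Mathlib

open MeasureTheory Metric Set Filter Bornology
open scoped ENNReal NNReal Topology RealInnerProductSpace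

noncomputable section

/-- Euclidean space `ℝ^N`. -/
abbrev Euc (N : ℕ) : Type := EuclideanSpace ℝ (Fin N)

/-- The `R`-truncated Wolff potential `W^R_{α,p}[μ](x)`; `R = ⊤` gives the full
Wolff potential `W_{α,p}[μ]`. -/
def wolff {N : ℕ} (α p : ℝ) (R : ℝ≥0∞) (μ : Measure (Euc N)) (x : Euc N) : ℝ≥0∞ :=
  ∫⁻ ρ in {ρ : ℝ | 0 < ρ ∧ ENNReal.ofReal ρ < R},
    (μ (ball x ρ) / ENNReal.ofReal (ρ ^ ((N : ℝ) - α * p))) ^ (1 / (p - 1)) /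
      ENNReal.ofReal ρ

/-- The `R`-truncated Riesz potential `I^R_β[μ](x)`; `R = ⊤` gives `I_β[μ]`. -/
def rieszPot {N : ℕ} (β : ℝ) (R : ℝ≥0∞) (μ : Measure (Euc N)) (x : Euc N) : ℝ≥0∞ :=
  ∫⁻ ρ in {ρ : ℝ | 0 < ρ ∧ ENNReal.ofReal ρ < R},
    μ (ball x ρ) / ENNReal.ofReal (ρ ^ ((N : ℝ) - β)) / ENNReal.ofReal ρ

/-- The Riesz capacity `Cap_{I_α,p}`. -/
def rieszCap (N : ℕ) (α p : ℝ) (O : Set (Euc N)) : ℝ≥0∞ :=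
  ⨅ (g : Euc N → ℝ≥0∞) (_ : Measurable g)
    (_ : ∀ x ∈ O, 1 ≤ rieszPot α ⊤ (volume.withDensity g) x),
    ∫⁻ x, g x ^ p

/-- The Bessel kernel of order `α` (up to the normalizing constant `c(N,α)`). -/
def besselKernel (N : ℕ) (α : ℝ) (x : Euc N) : ℝ :=
  ∫ t in Ioi (0 : ℝ),
    Real.exp (-(Real.pi * ‖x‖ ^ 2 / t) - t / (4 * Real.pi)) * t ^ ((α - (N : ℝ)) / 2) / t

/-- The Bessel capacity `Cap_{G_α,p}`. -/
def besselCap (N : ℕ) (α p : ℝ) (O : Set (Euc N)) : ℝ≥0∞ :=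
  ⨅ (g : Euc N → ℝ≥0∞) (_ : Measurable g)
    (_ : ∀ x ∈ O, 1 ≤ ∫⁻ y, ENNReal.ofReal (besselKernel N α (x - y)) * g y),
    ∫⁻ x, g x ^ p

/-- The `R`-truncated fractional maximal function `M^R_γ[μ]`. -/
def fracMax {N : ℕ} (γ : ℝ) (R : ℝ≥0∞) (μ : Measure (Euc N)) (x : Euc N) : ℝ≥0∞ :=
  ⨆ (t : ℝ) (_ : 0 < t) (_ : ENNReal.ofReal t < R),
    μ (ball x t) / ENNReal.ofReal (t ^ ((N : ℝ) - γ))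

/-- The potential `L^R_{α,s}[μ]`. -/
def Lpot {N : ℕ} (α s : ℝ) (R : ℝ≥0∞) (μ : Measure (Euc N)) (x : Euc N) : ℝ≥0∞ :=
  ∫⁻ t in {t : ℝ | 0 < t ∧ ENNReal.ofReal t < R},
    (μ (ball x t) / ENNReal.ofReal (t ^ ((N : ℝ) - α))) ^ s / ENNReal.ofReal t

/-- A mollifier: smooth, nonnegative, supported in the unit ball, of total mass one. -/
def IsMollifier {N : ℕ} (φ : Euc N → ℝ) : Prop :=
  ContDiff ℝ (⊤ : ℕ∞) φ ∧ (∀ x, 0 ≤ φ x) ∧ tsupport φ ⊆ ball 0 1 ∧ (∫ x, φ x) = 1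

/-- The measure with density `φ_n * μ`, where `φ_n(x) = n^N φ(n x)`. -/
def mollified {N : ℕ} (φ : Euc N → ℝ) (n : ℕ) (μ : Measure (Euc N)) : Measure (Euc N) :=
  volume.withDensity fun x =>
    ENNReal.ofReal (∫ y, (n : ℝ) ^ (N : ℕ) * φ ((n : ℝ) • (x - y)) ∂μ)

/-- The Bessel capacity does not increase under translation of the set. -/
lemma besselCap_preimage_add_left_le (N : ℕ) (β s : ℝ) (z : Euc N) (K : Set (Euc N)) :
    besselCap N β s ((fun y => z + y) ⁻¹' K) ≤ besselCap N β s K := by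
  unfold besselCap
  refine le_iInf fun g => le_iInf fun hg => le_iInf fun hK => ?_
  refine iInf_le_of_le (fun y => g (z + y)) <| iInf_le_of_le (hg.comp (measurable_const_add z)) <|
    iInf_le_of_le (fun x hx => (hK (z + x) hx).trans_eq ?_) (le_of_eq ?_)
  · rw [← lintegral_add_left_eq_self _ z]
    simp only [add_sub_add_left_eq_sub]
  · exact lintegral_add_left_eq_self (fun x => g x ^ s) z

/-- A rescaled mollifier has total mass one. -/
lemma IsMollifier.lintegral_rescale {N : ℕ} {φ : Euc N → ℝ} (hφ : IsMollifier φ) {n : ℕ}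
    (hn : 0 < n) :
    ∫⁻ z, ENNReal.ofReal ((n : ℝ) ^ N * φ ((n : ℝ) • z)) = 1 := by
  obtain ⟨hsmooth, hnonneg, hsupp, hint⟩ := hφ
  have hn' : (0 : ℝ) < n := by exact_mod_cast hn
  have hcompact : HasCompactSupport φ :=
    (isCompact_closedBall (0 : Euc N) 1).of_isClosed_subset (isClosed_tsupport φ)
      (hsupp.trans ball_subset_closedBall)
  have hintegrable : Integrable φ := hsmooth.continuous.integrable_of_hasCompactSupport hcompact
  rw [← ofReal_integral_eq_lintegral_ofReal
    ((hintegrable.comp_smul hn'.ne').const_mul _)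
    (Eventually.of_forall fun z => mul_nonneg (by positivity) (hnonneg _)),
    integral_const_mul, Measure.integral_comp_smul, hint]
  simp [hn'.ne']

/-- The mass given to a set by a mollified measure is at most the average of the masses of its
translates. -/
lemma mollified_apply_le {N : ℕ} {φ : Euc N → ℝ} (hφ : IsMollifier φ) (n : ℕ)
    (ω : Measure (Euc N)) [SFinite ω] {K : Set (Euc N)} (hK : MeasurableSet K) :
    mollified φ n ω K ≤
      ∫⁻ z, ENNReal.ofReal ((n : ℝ) ^ N * φ ((n : ℝ) • z)) * ω ((fun y => z + y) ⁻¹' K) := by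
  obtain ⟨hsmooth, hnonneg, -, -⟩ := hφ
  set ψ : Euc N → ℝ := fun z => (n : ℝ) ^ N * φ ((n : ℝ) • z) with hψ
  have hφc : Continuous φ := hsmooth.continuous
  have hψc : Continuous ψ := by fun_prop
  have hψ0 : ∀ z, 0 ≤ ψ z := fun z => mul_nonneg (by positivity) (hnonneg _)
  have hψm : Measurable fun z => ENNReal.ofReal (ψ z) := hψc.measurable.ennreal_ofReal
  have hKm : Measurable (K.indicator (1 : Euc N → ℝ≥0∞)) := measurable_one.indicator hK
  calc mollified φ n ω K
      = ∫⁻ x in K, ENNReal.ofReal (∫ y, ψ (x - y) ∂ω) := withDensity_apply _ hK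
    _ ≤ ∫⁻ x in K, ∫⁻ y, ENNReal.ofReal (ψ (x - y)) ∂ω := by
        refine lintegral_mono fun x => ?_
        rw [integral_eq_lintegral_of_nonneg_ae (Eventually.of_forall fun y => hψ0 _)
          (by fun_prop : Continuous fun y => ψ (x - y)).aestronglyMeasurable]
        exact ENNReal.ofReal_toReal_le
    _ = ∫⁻ y, (∫⁻ x in K, ENNReal.ofReal (ψ (x - y))) ∂ω :=
        lintegral_lintegral_swap
          (hψm.comp (measurable_fst.sub measurable_snd)).aemeasurable
    _ = ∫⁻ y, (∫⁻ z, ENNReal.ofReal (ψ z) * K.indicator 1 (z + y)) ∂ω := by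
        refine lintegral_congr fun y => ?_
        rw [← lintegral_indicator hK, ← lintegral_add_right_eq_self _ y]
        refine lintegral_congr fun z => ?_
        by_cases hz : z + y ∈ K <;> simp [hz]
    _ = ∫⁻ z, (∫⁻ y, ENNReal.ofReal (ψ z) * K.indicator 1 (z + y) ∂ω) :=
        lintegral_lintegral_swap
          ((hψm.comp measurable_snd).mul
            (hKm.comp (measurable_snd.add measurable_fst))).aemeasurable
    _ = ∫⁻ z, ENNReal.ofReal (ψ z) * ω ((fun y => z + y) ⁻¹' K) := by
        refine lintegral_congr fun z => ?_
        rw [← lintegral_indicator_one (measurable_const_add z hK)]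
        exact lintegral_const_mul _ (hKm.comp (measurable_const_add z))

/-- Stability of the Bessel-capacity Lipschitz estimate under
mollification, for a bounded measure supported in a ball. -/
theorem stmt6 (N : ℕ) (α p q : ℝ) (hα : 0 < α) (hp : 1 < p) (hpN : p < (N : ℝ) / α)
    (hq : p - 1 < q) :
    ∃ C > 0, ∀ (R : ℝ) (x0 : Euc N) (ω : Measure (Euc N)), 0 < R →
      IsFiniteMeasure ω → ω (ball x0 R)ᶜ = 0 →
      ∀ φ : Euc N → ℝ, IsMollifier φ →
      ∀ C2 : ℝ, 0 < C2 →
      (∀ K : Set (Euc N), IsCompact K →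
        ω K ≤ ENNReal.ofReal C2 * besselCap N (α * p) (q / (q - p + 1)) K) →
      ∀ n : ℕ, 0 < n → ∀ K : Set (Euc N), IsCompact K →
        mollified φ n ω K ≤
          ENNReal.ofReal (C * C2) * besselCap N (α * p) (q / (q - p + 1)) K := by
  refine ⟨1, one_pos, fun R x0 ω _ _ _ φ hφ C2 _ hω n hn K hK => ?_⟩
  rw [one_mul]
  refine (mollified_apply_le hφ n ω hK.measurableSet).trans ?_
  calc ∫⁻ z, ENNReal.ofReal ((n : ℝ) ^ N * φ ((n : ℝ) • z)) * ω ((fun y => z + y) ⁻¹' K)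
      ≤ ∫⁻ z, ENNReal.ofReal ((n : ℝ) ^ N * φ ((n : ℝ) • z)) *
          (ENNReal.ofReal C2 * besselCap N (α * p) (q / (q - p + 1)) K) := by
        refine lintegral_mono fun z => mul_le_mul_right ?_ _
        refine (hω _ ((Homeomorph.addLeft z).isCompact_preimage.2 hK)).trans ?_
        exact mul_le_mul_right (besselCap_preimage_add_left_le N _ _ z K) _
    _ = ENNReal.ofReal C2 * besselCap N (α * p) (q / (q - p + 1)) K := by
        have hφc : Continuous φ := hφ.1.continuous
        have hm : Measurable fun z => ENNReal.ofReal ((n : ℝ) ^ N * φ ((n : ℝ) • z)) :=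
          (by fun_prop : Continuous _).measurable.ennreal_ofReal
        rw [lintegral_mul_const _ hm, hφ.lintegral_rescale hn, one_mul]
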